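/- arXiv:2509.06575 — 3 statements merged into one kernel-verified Lean document; each statement's English description precedes it below -/
import Mathlib

section
/- Deterministic form of Lemma 3.3 (low-rank outliers bound the estimated rank): Let B̃ ∈ ℝ^{p×T} with its columns indexed by a partition {1,…,T} = S ⊔ S^c. Suppose the submatrix of S-columns of B̃ equals B̄_S with rank(B̄_S) = r, and the submatrix of S^c-columns equals B̄_{S^c} + Ñ where rank(B̄_{S^c}) = r_out and ‖Ñ‖ ≤ (3/4)τ for some τ > 0. Let r_∩ = dim(col(B̄_S) ∩ col(B̄_{S^c})), the dimension of the intersection of the two column spaces. Then σ_j(B̃) ≤ (3/4)τ for all j > r + r_out − r_∩. Consequently, if B̂ = B̃ + N with ‖N‖ < τ/4, then max{k : σ_k(B̂) ≥ τ} ≤ r + r_out − r_∩. -/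
open Matrix
open scoped Matrix.Norms.L2Operator Classical

/-- `sv M k` is the `k`-th largest singular value of `M` (1-indexed), characterized as the
distance (in ℓ²→ℓ² operator norm) from `M` to the set of matrices of rank `< k`.
In particular `sv M k = 0` whenever `k` exceeds `min` of the dimensions. -/
noncomputable def sv {m n : Type*} [Fintype m] [Fintype n] [DecidableEq n]
    (M : Matrix m n ℝ) (k : ℕ) : ℝ :=
  sInf {c : ℝ | ∃ L : Matrix m n ℝ, L.rank < k ∧ ‖M - L‖ = c}

theorem sv_le_of_rank_lt {p T : ℕ} (M L : Matrix (Fin p) (Fin T) ℝ) (k : ℕ) (h : L.rank < k) :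
    sv M k ≤ ‖M - L‖ := by
  unfold sv
  refine csInf_le ⟨0, ?_⟩ ⟨L, h, rfl⟩
  rintro c ⟨K, _, rfl⟩
  exact norm_nonneg _

/-- Deterministic form of Lemma 3.3 (low-rank outliers bound the estimated rank).
The columns of `B̃` are indexed by the partition `{1,…,T} = S ⊔ Sᶜ`; the matrices
`B̄_S`, `B̄_{Sᶜ}` and `Ñ` are encoded as `p × T` matrices whose columns vanish off `S`
(resp. off `Sᶜ`), so that the `S`-columns of `B̃` are those of `B̄_S` and the
`Sᶜ`-columns of `B̃` are those of `B̄_{Sᶜ} + Ñ`. With `rank B̄_S = r`,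
`rank B̄_{Sᶜ} = r_out`, `‖Ñ‖ ≤ (3/4)τ`, and
`r_∩ = dim (col B̄_S ⊓ col B̄_{Sᶜ})`, every singular value `σ_j(B̃)` with
`j > r + r_out − r_∩` is at most `(3/4)τ`; consequently, if `B̂ = B̃ + N` with
`‖N‖ < τ/4`, then `max{k ∈ {1,…,T} : σ_k(B̂) ≥ τ} ≤ r + r_out − r_∩`. -/
theorem low_rank_outliers_bound_estimated_rank
    {p T : ℕ} (Btil Bhat N : Matrix (Fin p) (Fin T) ℝ)
    (S : Finset (Fin T))
    (BS BSc Ntil : Matrix (Fin p) (Fin T) ℝ)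
    (τ : ℝ) (hτ : 0 < τ)
    (r rout rcap : ℕ)
    (hBS0 : ∀ i, ∀ t ∉ S, BS i t = 0)
    (hBSc0 : ∀ i, ∀ t ∈ S, BSc i t = 0)
    (hNtil0 : ∀ i, ∀ t ∈ S, Ntil i t = 0)
    (hScols : ∀ i, ∀ t ∈ S, Btil i t = BS i t)
    (hSccols : ∀ i, ∀ t ∉ S, Btil i t = BSc i t + Ntil i t)
    (hrankS : BS.rank = r)
    (hrankSc : BSc.rank = rout)
    (hNtil : ‖Ntil‖ ≤ (3 / 4) * τ)
    (hrcap : rcap =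
      Module.finrank ℝ ↥(LinearMap.range BS.mulVecLin ⊓ LinearMap.range BSc.mulVecLin))
    (hBhat : Bhat = Btil + N) (hN : ‖N‖ < τ / 4) :
    (∀ j : ℕ, r + rout - rcap < j → sv Btil j ≤ (3 / 4) * τ) ∧
      ((Finset.Icc 1 T).filter (fun k => τ ≤ sv Bhat k)).sup id ≤ r + rout - rcap := by
  have hdec : Btil - (BS + BSc) = Ntil := by
    ext i t
    by_cases ht : t ∈ S
    · simp [hScols i t ht, hBSc0 i t ht, hNtil0 i t ht]
    · simp [hSccols i t ht, hBS0 i t ht]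
  have hrank : (BS + BSc).rank ≤ r + rout - rcap := by
    have h1 := Submodule.finrank_sup_add_finrank_inf_eq
      (LinearMap.range BS.mulVecLin) (LinearMap.range BSc.mulVecLin)
    have h2 : (BS + BSc).rank ≤ Module.finrank ℝ
        ↥(LinearMap.range BS.mulVecLin ⊔ LinearMap.range BSc.mulVecLin) := by
      unfold Matrix.rank
      apply Submodule.finrank_mono
      rintro _ ⟨x, rfl⟩
      rw [Matrix.mulVecLin_add, LinearMap.add_apply]
      exact Submodule.add_mem_sup ⟨x, rfl⟩ ⟨x, rfl⟩
    unfold Matrix.rank at hrankS hrankSc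
    omega
  refine ⟨fun j hj => ?_, ?_⟩
  · refine (sv_le_of_rank_lt Btil (BS + BSc) j (by omega)).trans ?_
    rwa [hdec]
  · apply Finset.sup_le
    intro k hk
    rw [Finset.mem_filter] at hk
    by_contra hlt
    simp only [id, not_le] at hlt
    have h1 := sv_le_of_rank_lt Bhat (BS + BSc) k (by omega)
    have h2 : Bhat - (BS + BSc) = Ntil + N := by
      rw [hBhat, ← hdec]
      abel
    rw [h2] at h1
    have h3 := norm_add_le Ntil N
    linarith [hk.2]
end

section
/- Deterministic core of Proposition 3.4 (subspace estimation error of the spectral step): Let B̂ ∈ ℝ^{p×T} and let S ⊆ {1,…,T}. Suppose the submatrix of B̂ formed by the S-columns equals ĀΘ + N_S, where Ā ∈ ℝ^{p×r} has orthonormal columns, Θ ∈ ℝ^{r×|S|}, and ‖N_S‖ ≤ ν. Fix k̂ ≥ 0 and let Â ∈ ℝ^{p×k̂} consist of left singular vectors of B̂ associated with its k̂ largest singular values (from a singular value decomposition of B̂). Then ‖(I_p − ÂÂᵀ)Ā‖ · σ_r(Θ) ≤ σ_{k̂+1}(B̂) + ν. In particular, if σ_r(Θ) > 0, then ‖(I_p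 − ÂÂᵀ)Ā‖ ≤ (σ_{k̂+1}(B̂) + ν)/σ_r(Θ). -/
open Matrix
open scoped Matrix.Norms.L2Operator Classical

section Helpers

set_option linter.unusedSectionVars false

variable {l m n : Type*} [Fintype l] [Fintype m] [Fintype n]
  [DecidableEq l] [DecidableEq m] [DecidableEq n]

lemma aux_norm_sq (x : n → ℝ) : ‖WithLp.toLp 2 x‖ ^ 2 = x ⬝ᵥ x := by
  rw [EuclideanSpace.norm_sq_eq]
  simp [dotProduct, sq]

lemma aux_dot_nonneg (x : n → ℝ) : 0 ≤ x ⬝ᵥ x := by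
  rw [← aux_norm_sq]; positivity

lemma aux_mulVec_le (A : Matrix m n ℝ) (x : n → ℝ) :
    (A *ᵥ x) ⬝ᵥ (A *ᵥ x) ≤ ‖A‖ ^ 2 * (x ⬝ᵥ x) := by
  rw [← aux_norm_sq, ← aux_norm_sq, ← mul_pow]
  have := A.l2_opNorm_mulVec (WithLp.toLp 2 x)
  exact pow_le_pow_left₀ (norm_nonneg _) this 2

lemma aux_opNorm_le (A : Matrix m n ℝ) (c : ℝ) (hc : 0 ≤ c)
    (h : ∀ x : n → ℝ, (A *ᵥ x) ⬝ᵥ (A *ᵥ x) ≤ c ^ 2 * (x ⬝ᵥ x)) : ‖A‖ ≤ c := by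
  rw [l2_opNorm_def]
  refine ContinuousLinearMap.opNorm_le_bound _ hc fun x => ?_
  have h1 := h x.ofLp
  rw [← aux_norm_sq, ← aux_norm_sq, ← mul_pow] at h1
  exact (sq_le_sq₀ (norm_nonneg _) (by positivity)).1 h1

lemma aux_norm_transpose (A : Matrix m n ℝ) : ‖Aᵀ‖ = ‖A‖ := by
  rw [← conjTranspose_eq_transpose_of_trivial, l2_opNorm_conjTranspose]

lemma aux_norm_proj (Q : Matrix n n ℝ) (h1 : Qᵀ = Q) (h2 : Q * Q = Q) : ‖Q‖ ≤ 1 := by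
  have h := l2_opNorm_conjTranspose_mul_self Q
  rw [conjTranspose_eq_transpose_of_trivial, h1, h2] at h
  by_contra hc
  nlinarith

lemma aux_norm_orth (A : Matrix m n ℝ) (h1 : Aᵀ * A = 1) : ‖A‖ ≤ 1 := by
  have h := l2_opNorm_conjTranspose_mul_self A
  rw [conjTranspose_eq_transpose_of_trivial, h1] at h
  have h2 := aux_norm_proj (1 : Matrix n n ℝ) (by simp) (by simp)
  by_contra hc
  nlinarith

lemma aux_dot_orth (A : Matrix m n ℝ) (h1 : Aᵀ * A = 1) (x : n → ℝ) :
    (A *ᵥ x) ⬝ᵥ (A *ᵥ x) = x ⬝ᵥ x := by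
  rw [dotProduct_mulVec, vecMul_mulVec, ← dotProduct_mulVec, h1, one_mulVec]

lemma aux_rank_lt (A : Matrix m n ℝ) : A.rank < Fintype.card n ↔ ∃ z, z ≠ 0 ∧ A *ᵥ z = 0 := by
  have h := A.mulVecLin.finrank_range_add_finrank_ker
  rw [Module.finrank_pi] at h
  change A.rank + _ = _ at h
  have h2 : A.rank < Fintype.card n ↔ 0 < Module.finrank ℝ (LinearMap.ker A.mulVecLin) := by omega
  rw [h2, Module.finrank_pos_iff, Submodule.nontrivial_iff_ne_bot, Submodule.ne_bot_iff]
  simp [and_comm]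

lemma aux_sv_nonneg (M : Matrix m n ℝ) (k : ℕ) : 0 ≤ sv M k := by
  apply Real.sInf_nonneg
  rintro c ⟨L, -, rfl⟩
  exact norm_nonneg _

lemma aux_sv_le (M L : Matrix m n ℝ) (k : ℕ) (hL : L.rank < k) : sv M k ≤ ‖M - L‖ := by
  apply csInf_le
  · refine ⟨0, ?_⟩
    rintro c ⟨L, -, rfl⟩
    exact norm_nonneg _
  · exact ⟨L, hL, rfl⟩

lemma aux_le_sv (M : Matrix m n ℝ) (k : ℕ) (c : ℝ)
    (h : ∀ L : Matrix m n ℝ, L.rank < k + 1 → c ≤ ‖M - L‖) : c ≤ sv M (k + 1) := by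
  apply le_csInf
  · exact ⟨_, 0, by simp, rfl⟩
  · rintro _ ⟨L, hL, rfl⟩
    exact h L hL

lemma aux_cs (x y : n → ℝ) : (x ⬝ᵥ y) ^ 2 ≤ (x ⬝ᵥ x) * (y ⬝ᵥ y) := by
  have := Finset.sum_mul_sq_le_sq_mul_sq Finset.univ x y
  simpa [dotProduct, sq] using this

lemma aux_lower (Θ : Matrix m n ℝ) (y : m → ℝ) :
    (sv Θ (Fintype.card m)) ^ 2 * (y ⬝ᵥ y) ≤ (Θᵀ *ᵥ y) ⬝ᵥ (Θᵀ *ᵥ y) := by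
  by_cases hy : y = 0
  · simp [hy]
  have hq : 0 < y ⬝ᵥ y :=
    lt_of_le_of_ne (aux_dot_nonneg y) (fun h => hy (dotProduct_self_eq_zero.1 h.symm))
  set q := y ⬝ᵥ y with hqd
  set w := Θᵀ *ᵥ y with hw
  set K : Matrix m n ℝ := q⁻¹ • vecMulVec y w with hK
  have hrank : (Θ - K).rank < Fintype.card m := by
    rw [← rank_transpose, aux_rank_lt]
    refine ⟨y, hy, ?_⟩
    rw [hK, transpose_sub, sub_mulVec, transpose_smul, transpose_vecMulVec, smul_mulVec,
      vecMulVec_mulVec, ← hw, ← hqd]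
    ext i
    simp
    field_simp
    simp
  have h1 := aux_sv_le Θ (Θ - K) _ hrank
  rw [sub_sub_cancel] at h1
  have hw0 : 0 ≤ w ⬝ᵥ w := aux_dot_nonneg w
  have h2 : ‖K‖ ≤ √((w ⬝ᵥ w) / q) := by
    apply aux_opNorm_le _ _ (Real.sqrt_nonneg _)
    intro x
    rw [Real.sq_sqrt (by positivity), hK, smul_mulVec, vecMulVec_mulVec]
    have h3 := aux_cs w x
    simp only [op_smul_eq_smul, smul_dotProduct, dotProduct_smul, smul_eq_mul, ← hqd]
    have : q⁻¹ * (w ⬝ᵥ x * (q⁻¹ * (w ⬝ᵥ x * q))) = (w ⬝ᵥ x) ^ 2 / q := by field_simp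
    rw [this, div_mul_eq_mul_div]
    gcongr
  have h4 := pow_le_pow_left₀ (aux_sv_nonneg _ _) (h1.trans h2) 2
  rw [Real.sq_sqrt (by positivity), le_div_iff₀ hq] at h4
  exact h4

lemma aux_mul_lower (X : Matrix l m ℝ) (Θ : Matrix m n ℝ) :
    ‖X‖ * sv Θ (Fintype.card m) ≤ ‖X * Θ‖ := by
  rcases (aux_sv_nonneg Θ (Fintype.card m)).eq_or_lt with h0 | h0
  · rw [← h0]; simp
  rw [← le_div_iff₀ h0, ← aux_norm_transpose X]
  apply aux_opNorm_le _ _ (by positivity)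
  intro x
  have h1 := aux_lower Θ (Xᵀ *ᵥ x)
  have h2 := aux_mulVec_le (X * Θ)ᵀ x
  rw [aux_norm_transpose, transpose_mul, ← mulVec_mulVec] at h2
  rw [div_pow, div_mul_eq_mul_div, le_div_iff₀ (by positivity), mul_comm]
  exact h1.trans h2

end Helpers

lemma aux_sel {a b : Type*} [Fintype a] [Fintype b] [DecidableEq a] [DecidableEq b]
    (f : a → b) (hf : Function.Injective f) :
    ((1 : Matrix b b ℝ).submatrix id f)ᵀ * ((1 : Matrix b b ℝ).submatrix id f) = 1 := by
  ext i j
  simp [Matrix.mul_apply, Matrix.one_apply, hf.eq_iff]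

lemma aux_mul_sel {a b c : Type*} [Fintype a] [Fintype b] [DecidableEq a] [DecidableEq b]
    (f : a → b) (M : Matrix c b ℝ) :
    M * ((1 : Matrix b b ℝ).submatrix id f) = M.submatrix id f := by
  ext i j
  simp [Matrix.mul_apply, Matrix.one_apply]

/-- Easy half of Eckart-Young: a lower bound for `sv`. -/
lemma aux_sv_lower {p T m : ℕ} (U : Matrix (Fin p) (Fin m) ℝ) (V : Matrix (Fin T) (Fin m) ℝ)
    (hU : Uᵀ * U = 1) (hV : Vᵀ * V = 1) (σ : Fin m → ℝ) (hσmono : Antitone σ) (hσ0 : ∀ j, 0 ≤ σ j)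
    (k : ℕ) (hk : k < m) :
    σ ⟨k, hk⟩ ≤ sv (U * diagonal σ * Vᵀ) (k + 1) := by
  apply aux_le_sv
  intro L hL
  set f : Fin (k + 1) → Fin m := Fin.castLE hk
  have hf : Function.Injective f := Fin.castLE_injective _
  set E := (1 : Matrix (Fin m) (Fin m) ℝ).submatrix id f
  have hE : Eᵀ * E = 1 := aux_sel f hf
  set W := V * E
  have hW : Wᵀ * W = 1 := by
    rw [show Wᵀ * W = Eᵀ * (Vᵀ * V) * E by simp only [W, transpose_mul, Matrix.mul_assoc],
      hV, Matrix.mul_one, hE]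
  obtain ⟨z, hz, hLz⟩ := (aux_rank_lt (L * W)).1 (by
    rw [Fintype.card_fin]
    exact (rank_mul_le_left _ _).trans_lt hL)
  have hq : 0 < z ⬝ᵥ z :=
    lt_of_le_of_ne (aux_dot_nonneg z) (fun h => hz (dotProduct_self_eq_zero.1 h.symm))
  have h1 := aux_mulVec_le (U * diagonal σ * Vᵀ - L) (W *ᵥ z)
  rw [aux_dot_orth W hW, sub_mulVec, mulVec_mulVec z L W, hLz, sub_zero, mulVec_mulVec,
    show U * diagonal σ * Vᵀ * W = U * (diagonal σ * ((Vᵀ * V) * E)) by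
      simp only [W, Matrix.mul_assoc], hV, Matrix.one_mul, ← mulVec_mulVec,
    aux_dot_orth U hU] at h1
  have hD : diagonal σ * E = E * diagonal (σ ∘ f) := by
    ext i j
    rw [diagonal_mul, mul_diagonal]
    by_cases h : i = f j
    · rw [h, Function.comp_apply, mul_comm]
    · simp [E, h]
  rw [hD, ← mulVec_mulVec, aux_dot_orth E hE] at h1
  have h2 : σ ⟨k, hk⟩ ^ 2 * (z ⬝ᵥ z) ≤ (diagonal (σ ∘ f) *ᵥ z) ⬝ᵥ (diagonal (σ ∘ f) *ᵥ z) := by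
    simp only [dotProduct, mulVec_diagonal, Finset.mul_sum]
    refine Finset.sum_le_sum fun i _ => ?_
    have h3 : σ ⟨k, hk⟩ ≤ σ (f i) := hσmono (by
      rw [Fin.le_def]; simp [f]; omega)
    have h4 := pow_le_pow_left₀ (hσ0 _) h3 2
    have h5 := mul_le_mul_of_nonneg_right h4 (mul_self_nonneg (z i))
    refine h5.trans (le_of_eq ?_)
    simp only [Function.comp]
    ring
  have h3 := le_of_mul_le_mul_right (h2.trans h1) hq
  exact (sq_le_sq₀ (hσ0 _) (norm_nonneg _)).1 h3

/-- Deterministic core of Proposition 3.4 (subspace estimation error of the spectral step):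
the `S`-columns of `B̂` equal `ĀΘ + N_S` with `Ā` having orthonormal columns and
`‖N_S‖ ≤ ν`; `Â` consists of the left singular vectors of `B̂` associated with its `k̂`
largest singular values (from a singular value decomposition of `B̂`).  Then
`‖(I_p − ÂÂᵀ)Ā‖ · σ_r(Θ) ≤ σ_{k̂+1}(B̂) + ν`, and if `σ_r(Θ) > 0` then
`‖(I_p − ÂÂᵀ)Ā‖ ≤ (σ_{k̂+1}(B̂) + ν)/σ_r(Θ)`. -/
theorem subspace_estimation_error_core
    {p T : ℕ} (Bhat : Matrix (Fin p) (Fin T) ℝ)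
    (S : Finset (Fin T)) (r : ℕ)
    (Abar : Matrix (Fin p) (Fin r) ℝ) (hAbar : Abar.transpose * Abar = 1)
    (Θ : Matrix (Fin r) {t // t ∈ S} ℝ) (NS : Matrix (Fin p) {t // t ∈ S} ℝ)
    (ν : ℝ) (hNS : ‖NS‖ ≤ ν)
    (hsub : Bhat.submatrix id (fun t : {t // t ∈ S} => (t : Fin T)) = Abar * Θ + NS)
    (σ : Fin (min p T) → ℝ) (u : Fin (min p T) → Fin p → ℝ)
    (v : Fin (min p T) → Fin T → ℝ)
    (hσmono : Antitone σ) (hσ0 : ∀ j, 0 ≤ σ j)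
    (hu : ∀ j l, u j ⬝ᵥ u l = if j = l then (1 : ℝ) else 0)
    (hv : ∀ j l, v j ⬝ᵥ v l = if j = l then (1 : ℝ) else 0)
    (hsvd : Bhat = ∑ j, σ j • Matrix.vecMulVec (u j) (v j))
    (khat : ℕ) (hkhat : khat ≤ min p T)
    (Ahat : Matrix (Fin p) (Fin khat) ℝ)
    (hA : ∀ i (j : Fin khat), Ahat i j = u (Fin.castLE hkhat j) i) :
    ‖(1 - Ahat * Ahat.transpose) * Abar‖ * sv Θ r ≤ sv Bhat (khat + 1) + ν ∧
      (0 < sv Θ r →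
        ‖(1 - Ahat * Ahat.transpose) * Abar‖ ≤ (sv Bhat (khat + 1) + ν) / sv Θ r) := by
  have hfirst : ‖(1 - Ahat * Ahat.transpose) * Abar‖ * sv Θ r ≤ sv Bhat (khat + 1) + ν := by
    set U : Matrix (Fin p) (Fin (min p T)) ℝ := Matrix.of fun i j => u j i with hUd
    set V : Matrix (Fin T) (Fin (min p T)) ℝ := Matrix.of fun i j => v j i with hVd
    have hU : Uᵀ * U = 1 := by
      ext i j
      rw [Matrix.one_apply, ← hu i j]
      rfl
    have hV : Vᵀ * V = 1 := by
      ext i j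
      rw [Matrix.one_apply, ← hv i j]
      rfl
    have hB : Bhat = U * diagonal σ * Vᵀ := by
      rw [hsvd]
      ext i j
      simp only [Matrix.mul_apply, mul_diagonal, Matrix.sum_apply, Matrix.smul_apply,
        vecMulVec_apply, transpose_apply, hUd, hVd, Matrix.of_apply, smul_eq_mul, diagonal_apply,
        mul_ite, mul_zero, Finset.sum_ite_eq', Finset.mem_univ, if_true]
      refine Finset.sum_congr rfl fun x _ => ?_
      ring
    set f : Fin khat → Fin (min p T) := Fin.castLE hkhat with hfd
    have hf : Function.Injective f := Fin.castLE_injective _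
    set E := (1 : Matrix (Fin (min p T)) (Fin (min p T)) ℝ).submatrix id f with hEd
    have hE : Eᵀ * E = 1 := aux_sel f hf
    have hAE : Ahat = U * E := by
      rw [hEd, aux_mul_sel]
      ext i j
      exact hA i j
    have hAA : Ahatᵀ * Ahat = 1 := by
      rw [hAE, show (U * E)ᵀ * (U * E) = Eᵀ * (Uᵀ * U) * E by
        simp only [transpose_mul, Matrix.mul_assoc], hU, Matrix.mul_one, hE]
    set P := 1 - Ahat * Ahatᵀ with hP
    have hPn : ‖P‖ ≤ 1 := by
      apply aux_norm_proj
      · simp [hP, transpose_sub, transpose_mul]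
      · have : Ahat * Ahatᵀ * (Ahat * Ahatᵀ) = Ahat * Ahatᵀ := by
          rw [show Ahat * Ahatᵀ * (Ahat * Ahatᵀ) = Ahat * (Ahatᵀ * Ahat) * Ahatᵀ by
            simp only [Matrix.mul_assoc], hAA, Matrix.mul_one]
        rw [hP, Matrix.sub_mul, Matrix.mul_sub (Ahat * Ahatᵀ), this]
        simp
    set τ : Fin (min p T) → ℝ := fun j => if (j : ℕ) < khat then 0 else σ j with hτ
    have hPB : P * Bhat = U * diagonal τ * Vᵀ := by
      have h1 : P * U = U * (1 - E * Eᵀ) := by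
        rw [hP, Matrix.sub_mul, Matrix.mul_sub, hAE, transpose_mul,
          show U * E * (Eᵀ * Uᵀ) * U = U * (E * Eᵀ) * (Uᵀ * U) by simp only [Matrix.mul_assoc], hU]
        simp
      have h2 : E * Eᵀ = diagonal fun j : Fin (min p T) => if (j : ℕ) < khat then (1 : ℝ) else 0 := by
        ext i j
        rw [Matrix.mul_apply, diagonal_apply]
        simp only [hEd, transpose_apply, submatrix_apply, id, Matrix.one_apply]
        by_cases hi : (i : ℕ) < khat
        · have h3 : i = f ⟨i, hi⟩ := Fin.ext rfl
          rw [Finset.sum_eq_single (⟨i, hi⟩ : Fin khat)]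
          · rw [← h3]
            by_cases hij : i = j
            · simp [hij, hij ▸ hi]
            · simp [hij, Ne.symm hij]
          · intro b _ hb
            rw [if_neg, zero_mul]
            intro h4
            exact hb (hf (h4.symm.trans h3))
          · simp
        · rw [if_neg hi, ite_self]
          apply Finset.sum_eq_zero
          intro b _
          rw [if_neg, zero_mul]
          rintro rfl
          exact hi b.2
      have h3 : (1 - E * Eᵀ) * diagonal σ = diagonal τ := by
        rw [h2, ← diagonal_one, diagonal_sub, diagonal_mul_diagonal]
        congr 1
        ext j
        simp only [hτ]
        split_ifs <;> simp
      rw [hB, ← Matrix.mul_assoc, ← Matrix.mul_assoc, h1, Matrix.mul_assoc U, h3]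
    have hτn : ‖diagonal τ‖ ≤ sv Bhat (khat + 1) := by
      rw [l2_opNorm_diagonal]
      refine (pi_norm_le_iff_of_nonneg (aux_sv_nonneg _ _)).2 fun j => ?_
      simp only [hτ]
      split_ifs with hj
      · simpa using aux_sv_nonneg _ _
      · have hk : khat < min p T := lt_of_le_of_lt (not_lt.1 hj) j.2
        have h1 := aux_sv_lower U V hU hV σ hσmono hσ0 khat hk
        rw [← hB] at h1
        rw [Real.norm_of_nonneg (hσ0 j)]
        exact (hσmono (Fin.le_def.2 (not_lt.1 hj))).trans h1
    have hPBn : ‖P * Bhat‖ ≤ sv Bhat (khat + 1) := by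
      rw [hPB]
      have h1 := l2_opNorm_mul (U * diagonal τ) Vᵀ
      have h2 := l2_opNorm_mul U (diagonal τ)
      have h3 := aux_norm_orth U hU
      have h4 := aux_norm_orth V hV
      rw [aux_norm_transpose] at h1
      have h5 : ‖U * diagonal τ‖ ≤ ‖diagonal τ‖ :=
        h2.trans (mul_le_of_le_one_left (norm_nonneg _) h3)
      exact (h1.trans (mul_le_of_le_one_right (norm_nonneg _) h4)).trans (h5.trans hτn)
    have hkey : P * Abar * Θ = P * Bhat * (1 : Matrix (Fin T) (Fin T) ℝ).submatrix id
        (fun t : {t // t ∈ S} => (t : Fin T)) - P * NS := by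
      rw [Matrix.mul_assoc P Bhat, aux_mul_sel, hsub, Matrix.mul_add, Matrix.mul_assoc]
      simp
    have h1 := aux_mul_lower (P * Abar) Θ
    rw [Fintype.card_fin, hkey] at h1
    refine h1.trans ((norm_sub_le _ _).trans (add_le_add ?_ ?_))
    · refine (l2_opNorm_mul _ _).trans ((mul_le_of_le_one_right (norm_nonneg _) ?_).trans hPBn)
      exact aux_norm_orth _ (aux_sel _ Subtype.val_injective)
    · exact (l2_opNorm_mul _ _).trans ((mul_le_of_le_one_left (norm_nonneg _) hPn).trans hNS)
  exact ⟨hfirst, fun h => (le_div_iff₀ h).2 hfirst⟩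
end

section
/- Estimation-error bound for least squares restricted to an estimated subspace: Let X ∈ ℝ^{n×p}, β* ∈ ℝ^p, ε ∈ ℝ^n, y = Xβ* + ε, and Σ̂ = (1/n)XᵀX. Let Â ∈ ℝ^{p×k} have orthonormal columns with ÂᵀΣ̂Â invertible, and θ̂ = (ÂᵀΣ̂Â)^{-1}·(1/n)·ÂᵀXᵀy. Then ‖Âθ̂ − ÂÂᵀβ*‖₂ ≤ ‖(ÂᵀΣ̂Â)^{-1}ÂᵀΣ̂‖·‖(I_p − ÂÂᵀ)β*‖₂ + ‖(ÂᵀΣ̂Â)^{-1}·(1/n)·ÂᵀXᵀε‖₂, and consequently ‖Âθ̂ − β*‖₂ ≤ (1 + ‖(ÂᵀΣ̂Â)^{-1}ÂᵀΣ̂‖)·‖(I_p − ÂÂᵀ)β*‖₂ + ‖(ÂᵀΣ̂Â)^{-1}·(1/n)·ÂᵀXᵀε‖₂. -/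
open Matrix
open scoped Matrix.Norms.L2Operator Classical

/-- The Euclidean (`ℓ²`) norm of a finitely-indexed real vector. -/
noncomputable def enorm {ι : Type*} [Fintype ι] (x : ι → ℝ) : ℝ :=
  Real.sqrt (∑ i, x i ^ 2)

theorem enorm_eq_norm_aux {ι : Type*} [Fintype ι] (x : ι → ℝ) :
    _root_.enorm x = ‖(WithLp.toLp 2 x : EuclideanSpace ℝ ι)‖ := by
  simp [_root_.enorm, EuclideanSpace.norm_eq]

theorem enorm_add_le_aux {ι : Type*} [Fintype ι] (x y : ι → ℝ) :
    _root_.enorm (x + y) ≤ _root_.enorm x + _root_.enorm y := by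
  simp only [enorm_eq_norm_aux, WithLp.toLp_add]
  exact norm_add_le _ _

theorem enorm_neg_aux {ι : Type*} [Fintype ι] (x : ι → ℝ) :
    _root_.enorm (-x) = _root_.enorm x := by
  simp [_root_.enorm]

theorem enorm_mulVec_le_aux {m l : ℕ} (B : Matrix (Fin m) (Fin l) ℝ) (x : Fin l → ℝ) :
    _root_.enorm (B.mulVec x) ≤ ‖B‖ * _root_.enorm x := by
  simp only [enorm_eq_norm_aux]
  exact Matrix.l2_opNorm_mulVec B (WithLp.toLp 2 x)

theorem enorm_isometry_aux {m l : ℕ} (A : Matrix (Fin m) (Fin l) ℝ)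
    (hA : A.transpose * A = 1) (x : Fin l → ℝ) :
    _root_.enorm (A.mulVec x) = _root_.enorm x := by
  have h : A.mulVec x ⬝ᵥ A.mulVec x = x ⬝ᵥ x := by
    rw [Matrix.dotProduct_mulVec, ← Matrix.mulVec_transpose, Matrix.mulVec_mulVec, hA,
      Matrix.one_mulVec]
  unfold _root_.enorm
  congr 1
  simpa [dotProduct, pow_two] using h

/-- Estimation-error bound for least squares restricted to an estimated subspace:
with `y = Xβ* + ε`, `Σ̂ = (1/n)XᵀX`, `Â` having orthonormal columns and `ÂᵀΣ̂Â`
invertible, and `θ̂ = (ÂᵀΣ̂Â)⁻¹·(1/n)·ÂᵀXᵀy`,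
`‖Âθ̂ − ÂÂᵀβ*‖₂ ≤ ‖(ÂᵀΣ̂Â)⁻¹ÂᵀΣ̂‖·‖(I_p − ÂÂᵀ)β*‖₂ + ‖(ÂᵀΣ̂Â)⁻¹·(1/n)·ÂᵀXᵀε‖₂`,
and consequently
`‖Âθ̂ − β*‖₂ ≤ (1 + ‖(ÂᵀΣ̂Â)⁻¹ÂᵀΣ̂‖)·‖(I_p − ÂÂᵀ)β*‖₂ + ‖(ÂᵀΣ̂Â)⁻¹·(1/n)·ÂᵀXᵀε‖₂`. -/
theorem restricted_least_squares_error_bound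
    {n p k : ℕ} (hn : 0 < n)
    (X : Matrix (Fin n) (Fin p) ℝ) (βstar : Fin p → ℝ) (ε : Fin n → ℝ)
    (y : Fin n → ℝ) (hy : y = X.mulVec βstar + ε)
    (Sighat : Matrix (Fin p) (Fin p) ℝ) (hSig : Sighat = (n : ℝ)⁻¹ • (X.transpose * X))
    (Ahat : Matrix (Fin p) (Fin k) ℝ) (hA : Ahat.transpose * Ahat = 1)
    (hinv : IsUnit (Ahat.transpose * Sighat * Ahat))
    (θhat : Fin k → ℝ)
    (hθ : θhat = (Ahat.transpose * Sighat * Ahat)⁻¹.mulVec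
      ((n : ℝ)⁻¹ • (Ahat.transpose * X.transpose).mulVec y)) :
    _root_.enorm (Ahat.mulVec θhat - (Ahat * Ahat.transpose).mulVec βstar) ≤
        ‖(Ahat.transpose * Sighat * Ahat)⁻¹ * Ahat.transpose * Sighat‖ *
            _root_.enorm ((1 - Ahat * Ahat.transpose).mulVec βstar) +
          _root_.enorm ((Ahat.transpose * Sighat * Ahat)⁻¹.mulVec
            ((n : ℝ)⁻¹ • (Ahat.transpose * X.transpose).mulVec ε)) ∧
      _root_.enorm (Ahat.mulVec θhat - βstar) ≤
        (1 + ‖(Ahat.transpose * Sighat * Ahat)⁻¹ * Ahat.transpose * Sighat‖) *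
            _root_.enorm ((1 - Ahat * Ahat.transpose).mulVec βstar) +
          _root_.enorm ((Ahat.transpose * Sighat * Ahat)⁻¹.mulVec
            ((n : ℝ)⁻¹ • (Ahat.transpose * X.transpose).mulVec ε)) := by
  set M := Ahat.transpose * Sighat * Ahat with hM
  set N := M⁻¹.mulVec ((n : ℝ)⁻¹ • (Ahat.transpose * X.transpose).mulVec ε) with hN
  have hMM : M⁻¹ * M = 1 := Matrix.nonsing_inv_mul M ((Matrix.isUnit_iff_isUnit_det M).1 hinv)
  have h1 : θhat = (M⁻¹ * Ahat.transpose * Sighat).mulVec βstar + N := by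
    rw [hθ, hy, Matrix.mulVec_add, smul_add, Matrix.mulVec_add, ← hN]
    congr 1
    rw [Matrix.mulVec_mulVec, ← Matrix.smul_mulVec, Matrix.mulVec_mulVec, hSig]
    simp only [Matrix.mul_assoc, Matrix.mul_smul]
  have h2 : (M⁻¹ * Ahat.transpose * Sighat) * (1 - Ahat * Ahat.transpose)
      = M⁻¹ * Ahat.transpose * Sighat - Ahat.transpose := by
    have : M⁻¹ * Ahat.transpose * Sighat * (Ahat * Ahat.transpose)
        = (M⁻¹ * M) * Ahat.transpose := by
      simp only [hM, Matrix.mul_assoc]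
    rw [Matrix.mul_sub, Matrix.mul_one, this, hMM, Matrix.one_mul]
  have h3 : Ahat.mulVec θhat - (Ahat * Ahat.transpose).mulVec βstar
      = Ahat.mulVec ((M⁻¹ * Ahat.transpose * Sighat).mulVec
        ((1 - Ahat * Ahat.transpose).mulVec βstar) + N) := by
    rw [Matrix.mulVec_mulVec, h2, Matrix.sub_mulVec, ← Matrix.mulVec_mulVec βstar Ahat,
      ← Matrix.mulVec_sub, h1]
    congr 1
    abel
  have hfirst : _root_.enorm (Ahat.mulVec θhat - (Ahat * Ahat.transpose).mulVec βstar) ≤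
        ‖M⁻¹ * Ahat.transpose * Sighat‖ *
            _root_.enorm ((1 - Ahat * Ahat.transpose).mulVec βstar) + _root_.enorm N := by
    rw [h3, enorm_isometry_aux Ahat hA]
    exact (enorm_add_le_aux _ _).trans (by gcongr; exact enorm_mulVec_le_aux _ _)
  refine ⟨hfirst, ?_⟩
  have h4 : Ahat.mulVec θhat - βstar
      = (Ahat.mulVec θhat - (Ahat * Ahat.transpose).mulVec βstar)
        + -((1 - Ahat * Ahat.transpose).mulVec βstar) := by
    rw [Matrix.sub_mulVec, Matrix.one_mulVec]
    abel
  have h5 := enorm_add_le_aux (Ahat.mulVec θhat - (Ahat * Ahat.transpose).mulVec βstar)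
    (-((1 - Ahat * Ahat.transpose).mulVec βstar))
  rw [← h4, enorm_neg_aux] at h5
  linarith
end
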